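/- Let 𝔤 be a finite-dimensional complex simple Lie algebra with root system Φ, base Δ, and let α ∈ Δ be a long simple root; set Σ_q := {α} ∪ N(α). Then every root β with n_α(β) = 2 satisfies Σ_{γ∈N(α)} n_γ(β) ≥ 3, and hence ht_{Σ_q}(β) ≥ 5; symmetrically, every root β with n_α(β) = −2 satisfies ht_{Σ_q}(β) ≤ −5. -/

import Mathlib

open scoped RealInnerProductSpace Classical

/-!
For a long root `α` and a root `β ≠ ±α` the integer `⟨β, α^∨⟩` lies strictly between `-2` and `2`,
hence in `{-1, 0, 1}`. Pairing `β = ∑ n_γ γ` with `α^∨`, only `α` and its neighbours contribute: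
`1 ≥ ⟨β, α^∨⟩ = 2 n_α + ∑_{γ ∈ N(α)} n_γ ⟨γ, α^∨⟩ ≥ 2 n_α - ∑_{γ ∈ N(α)} n_γ`
as soon as all `n_γ` are nonnegative. Negative roots are treated by applying this to `-β`.
-/

section InnerCoroot

variable {E : Type*} [NormedAddCommGroup E] [InnerProductSpace ℝ E] {α β : E}

/-- The coroot `α^∨ = 2 (·, α) / (α, α)` of a vector `α` of a Euclidean space, as a linear
functional, so that `innerCoroot α β` is the Cartan number `⟨β, α^∨⟩`. It vanishes for `α = 0`. -/
noncomputable def innerCoroot (α : E) : Module.Dual ℝ E :=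
  (2 / ⟪α, α⟫) • innerₗ E α

theorem innerCoroot_apply (α β : E) : innerCoroot α β = 2 * ⟪β, α⟫ / ⟪α, α⟫ := by
  rw [innerCoroot, LinearMap.smul_apply, innerₗ_apply_apply, smul_eq_mul,
    real_inner_comm β α, div_mul_eq_mul_div]

theorem innerCoroot_self (hα : α ≠ 0) : innerCoroot α α = 2 := by
  rw [innerCoroot_apply, mul_div_cancel_right₀ _ (inner_self_ne_zero.2 hα)]

theorem abs_inner_lt_inner_self (hβα : β ≠ α) (hβα' : β ≠ -α) (hlen : ⟪β, β⟫ ≤ ⟪α, α⟫) :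
    |⟪β, α⟫| < ⟪α, α⟫ := by
  have hsub : 0 < ⟪β - α, β - α⟫ := real_inner_self_pos.2 (sub_ne_zero.2 hβα)
  have hadd : 0 < ⟪β + α, β + α⟫ := real_inner_self_pos.2 (mt eq_neg_of_add_eq_zero_left hβα')
  rw [real_inner_sub_sub_self] at hsub
  rw [real_inner_add_add_self] at hadd
  exact abs_lt.2 ⟨by linarith, by linarith⟩

theorem abs_innerCoroot_lt_two (hβα : β ≠ α) (hβα' : β ≠ -α) (hlen : ⟪β, β⟫ ≤ ⟪α, α⟫) :
    |innerCoroot α β| < 2 := by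
  have hlt : |⟪β, α⟫| < ⟪α, α⟫ := abs_inner_lt_inner_self hβα hβα' hlen
  have hpos : 0 < ⟪α, α⟫ := (abs_nonneg _).trans_lt hlt
  rw [innerCoroot_apply, abs_div, abs_mul, abs_two, abs_of_pos hpos, div_lt_iff₀ hpos]
  linarith

theorem abs_innerCoroot_le_one (hβα : β ≠ α) (hβα' : β ≠ -α) (hlen : ⟪β, β⟫ ≤ ⟪α, α⟫)
    (hint : ∃ m : ℤ, innerCoroot α β = m) : |innerCoroot α β| ≤ 1 := by
  obtain ⟨m, hm⟩ := hint
  have hlt : |innerCoroot α β| < 2 := abs_innerCoroot_lt_two hβα hβα' hlen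
  rw [hm] at hlt ⊢
  have hm2 : |m| < 2 := by exact_mod_cast hlt
  exact_mod_cast Int.lt_add_one_iff.1 hm2

end InnerCoroot

section Neighbors

variable {E : Type*} [NormedAddCommGroup E] [InnerProductSpace ℝ E] {Δ : Finset E} {α : E}

/-- The set `N(α)` of neighbours of `α` in the Dynkin diagram with vertex set `Δ`: the elements of
`Δ` other than `α` that are not orthogonal to `α`. -/
noncomputable def dynkinNeighbors (Δ : Finset E) (α : E) : Finset E :=
  Δ.filter fun γ => γ ≠ α ∧ ⟪γ, α⟫ ≠ 0

theorem mem_dynkinNeighbors {γ : E} :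
    γ ∈ dynkinNeighbors Δ α ↔ γ ∈ Δ ∧ γ ≠ α ∧ ⟪γ, α⟫ ≠ 0 :=
  Finset.mem_filter

theorem sum_insert_dynkinNeighbors {M : Type*} [AddCommMonoid M] (f : E → M) :
    ∑ γ ∈ insert α (dynkinNeighbors Δ α), f γ = f α + ∑ γ ∈ dynkinNeighbors Δ α, f γ :=
  Finset.sum_insert fun hmem => (mem_dynkinNeighbors.1 hmem).2.1 rfl

theorem innerCoroot_sum_smul (hαΔ : α ∈ Δ) (hα : α ≠ 0) (c : E → ℝ) :
    innerCoroot α (∑ γ ∈ Δ, c γ • γ) =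
      2 * c α + ∑ γ ∈ dynkinNeighbors Δ α, c γ * innerCoroot α γ := by
  have hsubset : insert α (dynkinNeighbors Δ α) ⊆ Δ :=
    Finset.insert_subset hαΔ (Finset.filter_subset _ _)
  have horthogonal : ∀ γ ∈ Δ, γ ∉ insert α (dynkinNeighbors Δ α) →
      c γ * innerCoroot α γ = 0 := by
    intro γ hγ hγN
    have hγα : ⟪γ, α⟫ = 0 := by
      simp only [Finset.mem_insert, mem_dynkinNeighbors] at hγN
      tauto
    rw [innerCoroot_apply, hγα, mul_zero, zero_div, mul_zero]
  calc innerCoroot α (∑ γ ∈ Δ, c γ • γ)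
      = ∑ γ ∈ Δ, c γ * innerCoroot α γ := by simp only [map_sum, map_smul, smul_eq_mul]
    _ = ∑ γ ∈ insert α (dynkinNeighbors Δ α), c γ * innerCoroot α γ :=
        (Finset.sum_subset hsubset horthogonal).symm
    _ = 2 * c α + ∑ γ ∈ dynkinNeighbors Δ α, c γ * innerCoroot α γ := by
        rw [sum_insert_dynkinNeighbors, innerCoroot_self hα, mul_comm]

theorem two_mul_coeff_sub_one_le_sum_dynkinNeighbors (hαΔ : α ∈ Δ) (hα : α ≠ 0) {c : E → ℝ}
    (hc : ∀ γ ∈ dynkinNeighbors Δ α, 0 ≤ c γ)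
    (hN : ∀ γ ∈ dynkinNeighbors Δ α, -1 ≤ innerCoroot α γ)
    (hle : innerCoroot α (∑ γ ∈ Δ, c γ • γ) ≤ 1) :
    2 * c α - 1 ≤ ∑ γ ∈ dynkinNeighbors Δ α, c γ := by
  have hsum : -∑ γ ∈ dynkinNeighbors Δ α, c γ ≤
      ∑ γ ∈ dynkinNeighbors Δ α, c γ * innerCoroot α γ := by
    rw [← Finset.sum_neg_distrib]
    refine Finset.sum_le_sum fun γ hγ => ?_
    linarith [mul_le_mul_of_nonneg_left (hN γ hγ) (hc γ hγ)]
  rw [innerCoroot_sum_smul hαΔ hα] at hle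
  linarith

end Neighbors

section LinearIndependence

variable {R V : Type*} {Δ : Finset V} {α : V}

theorem coeff_eq_of_sum_smul_eq_smul [Semiring R] [AddCommMonoid V] [Module R V]
    (hΔ : LinearIndepOn R id (Δ : Set V)) (hαΔ : α ∈ Δ) {c : V → R} {t : R}
    (h : ∑ γ ∈ Δ, c γ • γ = t • α) : c α = t := by
  have hsingle : ∑ γ ∈ Δ, Pi.single (M := fun _ => R) α t γ • γ = t • α := by
    simp [Pi.single_apply, hαΔ]
  simpa using linearIndepOn_finset_iffₛ.1 hΔ c (Pi.single α t) (h.trans hsingle.symm) α hαΔ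

theorem ne_neg_of_linearIndepOn [Ring R] [Nontrivial R] [AddCommGroup V] [Module R V]
    (hΔ : LinearIndepOn R id (Δ : Set V)) (hαΔ : α ∈ Δ) {γ : V} (hγΔ : γ ∈ Δ) (hγα : γ ≠ α) :
    γ ≠ -α := by
  intro hneg
  have hsum : ∑ δ ∈ Δ, Pi.single (M := fun _ => R) γ 1 δ • δ = (-1 : R) • α := by
    rw [neg_one_smul, ← hneg]
    simp [Pi.single_apply, hγΔ]
  have hcoeff := coeff_eq_of_sum_smul_eq_smul hΔ hαΔ hsum
  rw [Pi.single_eq_of_ne hγα.symm] at hcoeff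
  exact neg_ne_zero.2 one_ne_zero hcoeff.symm

end LinearIndependence

section LongSimpleRoot

variable {E : Type*} [NormedAddCommGroup E] [InnerProductSpace ℝ E] {Δ : Finset E} {α : E}

theorem neg_one_le_innerCoroot_of_mem_dynkinNeighbors (hΔ : LinearIndepOn ℝ id (Δ : Set E))
    (hαΔ : α ∈ Δ) {γ : E} (hγ : γ ∈ dynkinNeighbors Δ α) (hlen : ⟪γ, γ⟫ ≤ ⟪α, α⟫)
    (hint : ∃ m : ℤ, innerCoroot α γ = m) : -1 ≤ innerCoroot α γ := by
  obtain ⟨hγΔ, hγα, -⟩ := mem_dynkinNeighbors.1 hγ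
  have hγα' : γ ≠ -α := ne_neg_of_linearIndepOn hΔ hαΔ hγΔ hγα
  exact (abs_le.1 (abs_innerCoroot_le_one hγα hγα' hlen hint)).1

theorem abs_innerCoroot_le_one_of_one_lt_abs_coeff (hΔ : LinearIndepOn ℝ id (Δ : Set E))
    (hαΔ : α ∈ Δ) {β : E} {c : E → ℝ} (hβ : β = ∑ γ ∈ Δ, c γ • γ) (hc : 1 < |c α|)
    (hlen : ⟪β, β⟫ ≤ ⟪α, α⟫) (hint : ∃ m : ℤ, innerCoroot α β = m) :
    |innerCoroot α β| ≤ 1 := by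
  have hne : ∀ t : ℝ, |t| = 1 → β ≠ t • α := by
    intro t ht hβt
    have hcoeff : c α = t := coeff_eq_of_sum_smul_eq_smul hΔ hαΔ (hβ.symm.trans hβt)
    exact hc.ne' (hcoeff ▸ ht)
  have hβα : β ≠ α := by simpa using hne 1 abs_one
  have hβα' : β ≠ -α := by simpa using hne (-1) (by simp)
  exact abs_innerCoroot_le_one hβα hβα' hlen hint

end LongSimpleRoot

theorem coefficient_two_roots_have_large_q_height_general
    {E : Type*} [NormedAddCommGroup E] [InnerProductSpace ℝ E] {Φ : Set E} {Δ : Finset E}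
    (hΔΦ : (Δ : Set E) ⊆ Φ) (hΔ : LinearIndepOn ℝ id (Δ : Set E)) {n : E → E → ℝ}
    (hn : ∀ β ∈ Φ, β = ∑ γ ∈ Δ, n β γ • γ)
    (hsign : ∀ β ∈ Φ, (∀ γ ∈ Δ, 0 ≤ n β γ) ∨ (∀ γ ∈ Δ, n β γ ≤ 0))
    {α : E} (hαΔ : α ∈ Δ) (hint : ∀ β ∈ Φ, ∃ m : ℤ, innerCoroot α β = m)
    (hlong : ∀ β ∈ Φ, ⟪β, β⟫ ≤ ⟪α, α⟫) :
    (∀ β ∈ Φ, 1 < n β α →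
      2 * n β α - 1 ≤ ∑ γ ∈ dynkinNeighbors Δ α, n β γ ∧
      3 * n β α - 1 ≤ ∑ γ ∈ insert α (dynkinNeighbors Δ α), n β γ) ∧
    (∀ β ∈ Φ, n β α < -1 →
      ∑ γ ∈ dynkinNeighbors Δ α, n β γ ≤ 2 * n β α + 1 ∧
      ∑ γ ∈ insert α (dynkinNeighbors Δ α), n β γ ≤ 3 * n β α + 1) := by
  have hα : α ≠ 0 := hΔ.ne_zero hαΔ
  have hΔN : ∀ γ ∈ dynkinNeighbors Δ α, γ ∈ Δ := fun γ hγ => (mem_dynkinNeighbors.1 hγ).1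
  have hN : ∀ γ ∈ dynkinNeighbors Δ α, -1 ≤ innerCoroot α γ := fun γ hγ =>
    have hγΦ : γ ∈ Φ := hΔΦ (hΔN γ hγ)
    neg_one_le_innerCoroot_of_mem_dynkinNeighbors hΔ hαΔ hγ (hlong γ hγΦ) (hint γ hγΦ)
  have hbound : ∀ β ∈ Φ, 1 < |n β α| → |innerCoroot α β| ≤ 1 := fun β hβ hlt =>
    abs_innerCoroot_le_one_of_one_lt_abs_coeff hΔ hαΔ (hn β hβ) hlt (hlong β hβ) (hint β hβ)
  simp only [sum_insert_dynkinNeighbors]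
  refine ⟨fun β hβ hlt => ?_, fun β hβ hlt => ?_⟩
  · have hnonneg : ∀ γ ∈ Δ, 0 ≤ n β γ :=
      (hsign β hβ).resolve_right fun h => by linarith [h α hαΔ]
    have hle : innerCoroot α (∑ γ ∈ Δ, n β γ • γ) ≤ 1 := by
      rw [← hn β hβ]
      exact (abs_le.1 (hbound β hβ (lt_abs.2 (.inl hlt)))).2
    have hsum : 2 * n β α - 1 ≤ ∑ γ ∈ dynkinNeighbors Δ α, n β γ :=
      two_mul_coeff_sub_one_le_sum_dynkinNeighbors hαΔ hα
        (fun γ hγ => hnonneg γ (hΔN γ hγ)) hN hle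
    constructor <;> linarith
  · have hnonpos : ∀ γ ∈ Δ, n β γ ≤ 0 :=
      (hsign β hβ).resolve_left fun h => by linarith [h α hαΔ]
    have hle : innerCoroot α (∑ γ ∈ Δ, (-n β γ) • γ) ≤ 1 := by
      simp only [neg_smul, Finset.sum_neg_distrib]
      rw [← hn β hβ, map_neg]
      linarith [(abs_le.1 (hbound β hβ (lt_abs.2 (.inr (by linarith))))).1]
    have hsum : 2 * -n β α - 1 ≤ ∑ γ ∈ dynkinNeighbors Δ α, -n β γ :=
      two_mul_coeff_sub_one_le_sum_dynkinNeighbors hαΔ hα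
        (fun γ hγ => neg_nonneg.2 (hnonpos γ (hΔN γ hγ))) hN hle
    rw [Finset.sum_neg_distrib] at hsum
    constructor <;> linarith

/-- Let `Φ` be the root system of a finite-dimensional complex simple Lie algebra
(an irreducible reduced crystallographic root system) with base `Δ`, and let `α ∈ Δ` be a
long simple root; set `Σ_q := {α} ∪ N(α)`.  Then every root `β` with `n_α(β) = 2`
satisfies `Σ_{γ∈N(α)} n_γ(β) ≥ 3`, and hence `ht_{Σ_q}(β) ≥ 5`; symmetrically, every root
`β` with `n_α(β) = −2` satisfies `ht_{Σ_q}(β) ≤ −5`. -/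
theorem coefficient_two_roots_have_large_q_height
    {E : Type*} [NormedAddCommGroup E] [InnerProductSpace ℝ E]
    (Φ : Finset E)
    (hΦ0 : (0 : E) ∉ Φ)
    (hspan : Submodule.span ℝ (Φ : Set E) = ⊤)
    (hrefl : ∀ α ∈ Φ, ∀ β ∈ Φ, β - (2 * ⟪β, α⟫ / ⟪α, α⟫) • α ∈ Φ)
    (hcrys : ∀ α ∈ Φ, ∀ β ∈ Φ, ∃ m : ℤ, 2 * ⟪β, α⟫ / ⟪α, α⟫ = (m : ℝ))
    (hred : ∀ α ∈ Φ, ∀ t : ℝ, t • α ∈ Φ → t = 1 ∨ t = -1)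
    (hirr : ∀ S : Set E,
      (∀ β ∈ Φ, ∀ γ ∈ Φ, β ∈ S → ⟪β, γ⟫ ≠ 0 → γ ∈ S) →
      (∃ β ∈ Φ, β ∈ S) → ∀ β ∈ Φ, β ∈ S)
    (Δ : Finset E) (hΔΦ : (Δ : Set E) ⊆ (Φ : Set E))
    (hΔli : LinearIndependent ℝ (fun γ : Δ => (γ : E)))
    (n : E → E → ℤ)
    (hn : ∀ β ∈ Φ, β = ∑ γ ∈ Δ, (n β γ : ℝ) • γ)
    (hsign : ∀ β ∈ Φ, (∀ γ ∈ Δ, 0 ≤ n β γ) ∨ (∀ γ ∈ Δ, n β γ ≤ 0))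
    (α : E) (hαΔ : α ∈ Δ)
    (hlong : ∀ γ ∈ Φ, ⟪γ, γ⟫ ≤ ⟪α, α⟫)
    (Nbr : Finset E) (hNbr : Nbr = Δ.filter fun γ => γ ≠ α ∧ ⟪γ, α⟫ ≠ 0)
    (Sq : Finset E) (hSq : Sq = insert α Nbr)
    (htq : E → ℤ) (hhtq : ∀ β, htq β = ∑ γ ∈ Sq, n β γ) :
    (∀ β ∈ Φ, n β α = 2 → (3 ≤ ∑ γ ∈ Nbr, n β γ) ∧ 5 ≤ htq β) ∧
    (∀ β ∈ Φ, n β α = -2 → htq β ≤ -5) := by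
  obtain rfl : Nbr = dynkinNeighbors Δ α := hNbr
  obtain ⟨hpos, hneg⟩ := coefficient_two_roots_have_large_q_height_general
    (n := fun β γ => (n β γ : ℝ)) hΔΦ hΔli hn (by exact_mod_cast hsign) hαΔ
    (by simpa only [innerCoroot_apply] using! hcrys α (hΔΦ hαΔ)) hlong
  norm_cast at hpos hneg
  simp only [hhtq, hSq]
  exact ⟨fun β hβ h2 => by simpa only [h2] using! hpos β hβ (by lia),
    fun β hβ h2 => by simpa only [h2] using! (hneg β hβ (by lia)).2⟩
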